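/- Let Δ ⊂ ℝⁿ be the simplex with vertices v₀ = 0 and vᵢ = (a₁, ..., aᵢ, 0, ..., 0) for i = 1,...,n, where a₁,...,aₙ > 0 (each vᵢ extends v_{i-1} by one positive coordinate aᵢ, with equal preceding coordinates). Let Δ_τ := Δ \ (ℝ^{n-1} × [0,τ)) for 0 < τ < min(1, aₙ). Then ∫_{Δ_τ} dx₁⋯dxₙ/(x₁⋯xₙ) = (log aₙ - log τ)ⁿ / n!. -/

import Mathlib

open MeasureTheory

def stairSet {n : ℕ} (a : Fin n → ℝ) (c u : ℝ) : Set (Fin n → ℝ) :=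
  {x | (∀ i j, i ≤ j → x j / a j ≤ x i / a i) ∧ ∀ i, c ≤ x i / a i ∧ x i / a i ≤ u}

lemma stairSet_cons {n : ℕ} (a : Fin (n+1) → ℝ) (c u t : ℝ) (y : Fin n → ℝ) :
    (Fin.cons t y : Fin (n+1) → ℝ) ∈ stairSet a c u ↔
      (c ≤ t / a 0 ∧ t / a 0 ≤ u) ∧ y ∈ stairSet (fun i => a i.succ) c (t / a 0) := by
  simp only [stairSet, Set.mem_ofPred_eq, Fin.forall_fin_succ, Fin.cons_zero, Fin.cons_succ,
    Fin.succ_le_succ_iff]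
  constructor
  · rintro ⟨⟨⟨-, h1⟩, h2⟩, h3, h4⟩
    exact ⟨h3, fun i j hij => (h2 i).2 j hij, fun i => ⟨(h4 i).1, h1 i (Fin.zero_le _)⟩⟩
  · rintro ⟨h3, h1, h2⟩
    refine ⟨⟨⟨fun _ => le_rfl, fun i _ => (h2 i).2⟩, fun i => ⟨fun h => ?_, fun j hij => h1 i j hij⟩⟩,
      h3, fun i => ⟨(h2 i).1, (h2 i).2.trans h3.2⟩⟩
    exact absurd h (by simp)

lemma stairSet_closed {n : ℕ} (a : Fin n → ℝ) (c u : ℝ) : IsClosed (stairSet a c u) := by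
  have : stairSet a c u = (⋂ i, ⋂ j, ⋂ (_ : i ≤ j), {x : Fin n → ℝ | x j / a j ≤ x i / a i}) ∩
      ⋂ i, ({x : Fin n → ℝ | c ≤ x i / a i} ∩ {x : Fin n → ℝ | x i / a i ≤ u}) := by
    ext x; simp [stairSet]
  rw [this]
  refine IsClosed.inter ?_ ?_
  · refine isClosed_iInter fun i => isClosed_iInter fun j => isClosed_iInter fun _ => ?_
    exact isClosed_le (by fun_prop) (by fun_prop)
  · refine isClosed_iInter fun i => IsClosed.inter ?_ ?_
    · exact isClosed_le (by fun_prop) (by fun_prop)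
    · exact isClosed_le (by fun_prop) (by fun_prop)

lemma stairSet_compact {n : ℕ} (a : Fin n → ℝ) (ha : ∀ j, 0 < a j) (c u : ℝ) :
    IsCompact (stairSet a c u) := by
  refine IsCompact.of_isClosed_subset (isCompact_univ_pi (fun i => isCompact_Icc (a := c * a i) (b := u * a i)))
    (stairSet_closed a c u) ?_
  intro x hx i _
  have := hx.2 i
  rw [le_div_iff₀ (ha i), div_le_iff₀ (ha i)] at this
  exact this

lemma stairSet_integrable {n : ℕ} (a : Fin n → ℝ) (ha : ∀ j, 0 < a j) (c u : ℝ) (hc : 0 < c) :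
    IntegrableOn (fun x : Fin n → ℝ => (∏ j, x j)⁻¹) (stairSet a c u) := by
  refine ContinuousOn.integrableOn_compact (stairSet_compact a ha c u) ?_
  refine ContinuousOn.inv₀ (by fun_prop) ?_
  intro x hx
  refine Finset.prod_ne_zero_iff.2 fun i _ h => ?_
  have := (hx.2 i).1
  rw [h] at this; simp at this; linarith

lemma log_integral (n : ℕ) (b c u : ℝ) (hb : 0 < b) (hc : 0 < c) (hcu : c ≤ u) :
    ∫ t in Set.Icc (c * b) (u * b), t⁻¹ * ((Real.log (t / b) - Real.log c) ^ n / n.factorial)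
      = (Real.log u - Real.log c) ^ (n+1) / (n+1).factorial := by
  have hle : c * b ≤ u * b := by gcongr
  have hpos : ∀ t ∈ Set.uIcc (c * b) (u * b), 0 < t := by
    intro t ht
    rw [Set.uIcc_of_le hle] at ht
    exact lt_of_lt_of_le (by positivity) ht.1
  rw [integral_Icc_eq_integral_Ioc, ← intervalIntegral.integral_of_le hle]
  rw [intervalIntegral.integral_eq_sub_of_hasDerivAt
    (f := fun t => (Real.log (t / b) - Real.log c) ^ (n+1) / (n+1).factorial)]
  · simp [hb.ne']
  · intro t ht
    have ht0 := hpos t ht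
    have h1 : HasDerivAt (fun t => Real.log (t / b) - Real.log c) ((1 / b) / (t / b)) t :=
      (((hasDerivAt_id t).div_const b).log (by simp; exact ⟨ht0.ne', hb.ne'⟩)).sub_const _
    have h2 := (h1.pow (n+1)).div_const ((n+1).factorial : ℝ)
    refine h2.congr_deriv ?_
    rw [Nat.factorial_succ]
    have : (n.factorial : ℝ) ≠ 0 := by positivity
    push_cast
    field_simp
  · apply ContinuousOn.intervalIntegrable
    have : ∀ t ∈ Set.uIcc (c * b) (u * b), t ≠ 0 := fun t ht => (hpos t ht).ne'
    refine (continuousOn_id.inv₀ this).mul (ContinuousOn.div_const (ContinuousOn.pow (ContinuousOn.sub (ContinuousOn.log (by fun_prop) ?_) continuousOn_const) n) _)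
    intro t ht
    exact div_ne_zero (this t ht) hb.ne'

lemma stair_integral : ∀ (n : ℕ) (a : Fin n → ℝ) (_ : ∀ j, 0 < a j) (c u : ℝ) (_ : 0 < c)
    (_ : c ≤ u), ∫ x in stairSet a c u, (∏ j, x j)⁻¹
      = (Real.log u - Real.log c) ^ n / n.factorial := by
  intro n
  induction n with
  | zero =>
    intro a ha c u hc hcu
    have : stairSet a c u = Set.univ := by
      ext x; simp [stairSet]
    rw [this]
    simp only [Finset.univ_eq_empty, Finset.prod_empty, inv_one, pow_zero, Nat.factorial_zero,
      Nat.cast_one, div_one, Measure.restrict_univ]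
    rw [volume_pi, Measure.pi_of_empty]
    simp
  | succ n ih =>
    intro a ha c u hc hcu
    have hm := (stairSet_closed a c u).measurableSet
    rw [← integral_indicator hm]
    set g := (stairSet a c u).indicator (fun x : Fin (n+1) → ℝ => (∏ j, x j)⁻¹) with hg
    have hgi : Integrable g := (integrable_indicator_iff hm).2 (stairSet_integrable a ha c u hc)
    have hmp := (volume_preserving_piFinSuccAbove (fun _ : Fin (n+1) => ℝ) 0).symm
    have hcons : ∀ p : ℝ × (Fin n → ℝ),
      (MeasurableEquiv.piFinSuccAbove (fun _ : Fin (n+1) => ℝ) 0).symm p = Fin.cons p.1 p.2 := by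
      intro p
      simp [MeasurableEquiv.piFinSuccAbove, Fin.insertNthEquiv]
    have hgi' : Integrable (fun p : ℝ × (Fin n → ℝ) => g (Fin.cons p.1 p.2))
        ((volume : Measure ℝ).prod volume) := by
      have := (hmp.integrable_comp_emb (MeasurableEquiv.measurableEmbedding _) (g := g)).2 hgi
      simp only [Function.comp_def, hcons] at this
      exact this
    rw [← hmp.integral_comp (MeasurableEquiv.measurableEmbedding _) g]
    simp only [hcons]
    erw [integral_prod _ hgi']
    rw [← log_integral n (a 0) c u (ha 0) hc hcu, ← integral_indicator measurableSet_Icc]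
    congr 1
    ext t
    by_cases ht : t ∈ Set.Icc (c * a 0) (u * a 0)
    · have ht' : c ≤ t / a 0 ∧ t / a 0 ≤ u := by
        rw [le_div_iff₀ (ha 0), div_le_iff₀ (ha 0)]; exact ht
      rw [Set.indicator_of_mem ht, ← ih (fun i => a i.succ) (fun i => ha _) c (t / a 0) hc ht'.1,
        ← integral_const_mul, ← integral_indicator (stairSet_closed _ _ _).measurableSet]
      congr 1
      ext y
      by_cases hy : y ∈ stairSet (fun i => a i.succ) c (t / a 0)
      · rw [hg, Set.indicator_of_mem hy, Set.indicator_of_mem ((stairSet_cons _ _ _ _ _).2 ⟨ht', hy⟩),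
          Fin.prod_univ_succ]
        simp [mul_comm]
      · rw [hg, Set.indicator_of_notMem hy, Set.indicator_of_notMem
          (fun h => hy ((stairSet_cons _ _ _ _ _).1 h).2)]
    · rw [Set.indicator_of_notMem ht]
      have : ∀ y : Fin n → ℝ, g (Fin.cons t y) = 0 := by
        intro y
        rw [hg, Set.indicator_of_notMem]
        intro h
        have := ((stairSet_cons _ _ _ _ _).1 h).1
        rw [le_div_iff₀ (ha 0), div_le_iff₀ (ha 0)] at this
        exact ht this
      simp [this]

lemma tele_sum (Y : ℕ → ℝ) (j m : ℕ) (h : j < m) :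
    ∑ i ∈ Finset.range m, (if j < i then Y i - Y (i+1) else 0) = Y (j+1) - Y m := by
  induction m with
  | zero => omega
  | succ m ih =>
    rw [Finset.sum_range_succ]
    rcases Nat.lt_succ_iff_lt_or_eq.1 h with h | h
    · rw [ih h, if_pos h]; ring
    · subst h
      rw [if_neg (lt_irrefl _), Finset.sum_eq_zero]
      · simp
      · intro i hi
        rw [if_neg]
        have := Finset.mem_range.1 hi
        omega

lemma hull_eq {n : ℕ} (a : Fin (n + 1) → ℝ) (ha : ∀ j, 0 < a j)
    (v : Fin (n + 2) → (Fin (n + 1) → ℝ))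
    (hv : ∀ i j, v i j = if (j : ℕ) < (i : ℕ) then a j else 0) :
    convexHull ℝ (Set.range v) = stairSet a 0 1 := by
  apply Set.Subset.antisymm
  · apply convexHull_min
    · rintro _ ⟨i, rfl⟩
      have key : ∀ j, v i j / a j = if (j : ℕ) < (i : ℕ) then 1 else 0 := by
        intro j
        rw [hv]
        split_ifs
        · exact div_self (ha j).ne'
        · simp
      constructor
      · intro j k hjk
        rw [key, key]
        have : (j : ℕ) ≤ k := hjk
        split_ifs <;> first | omega | norm_num
      · intro j
        rw [key]
        split_ifs <;> norm_num
    · intro x hx y hy s t hs ht hst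
      have key : ∀ j, (s • x + t • y) j / a j = s * (x j / a j) + t * (y j / a j) := by
        intro j
        simp [add_div, mul_div_assoc]
      constructor
      · intro i j hij
        rw [key, key]
        have := hx.1 i j hij
        have := hy.1 i j hij
        gcongr
      · intro i
        rw [key]
        have h1 := hx.2 i
        have h2 := hy.2 i
        constructor
        · have := mul_nonneg hs h1.1
          have := mul_nonneg ht h2.1
          linarith
        · have := mul_le_mul_of_nonneg_left h1.2 hs
          have := mul_le_mul_of_nonneg_left h2.2 ht
          linarith
  · intro x hx
    let Y : ℕ → ℝ := fun k => if k = 0 then 1 else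
      if h : k - 1 < n + 1 then x ⟨k - 1, h⟩ / a ⟨k - 1, h⟩ else 0
    have hY0 : Y 0 = 1 := by simp [Y]
    have hYs : ∀ j : Fin (n+1), Y (j+1) = x j / a j := by
      intro j
      have hj := j.isLt
      simp only [Y, Nat.add_sub_cancel, Nat.succ_ne_zero, if_false, dif_pos hj]
    have hYl : Y (n+2) = 0 := by simp [Y]
    have hw : ∀ i : Fin (n+2), 0 ≤ Y i - Y (i+1) := by
      intro i
      rw [sub_nonneg]
      induction i using Fin.cases with
      | zero =>
        have := hYs 0
        simp only [Fin.val_zero] at this ⊢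
        rw [this, hY0]
        exact (hx.2 0).2
      | succ i =>
        rw [Fin.val_succ, hYs]
        rcases Nat.lt_or_ge (i.val + 1) (n+1) with h | h
        · have := hYs ⟨i.val+1, h⟩
          simp only at this
          rw [this]
          exact hx.1 _ _ (by simp [Fin.le_def])
        · have : i.val + 1 + 1 = n + 2 := by omega
          rw [this, hYl]
          exact (hx.2 i).1
    have hsum : ∑ i : Fin (n+2), (Y i - Y (i+1)) = 1 := by
      rw [Fin.sum_univ_eq_sum_range (fun i => Y i - Y (i+1)), Finset.sum_range_sub', hY0, hYl]
      simp
    have hxe : ∑ i : Fin (n+2), (Y i - Y (i+1)) • v i = x := by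
      ext j
      have h1 := tele_sum Y j (n+2) (by omega)
      rw [← Fin.sum_univ_eq_sum_range (fun i => if (j : ℕ) < i then Y i - Y (i+1) else 0), hYs, hYl,
        sub_zero] at h1
      have h2 : x j = (x j / a j) * a j := by
        rw [div_mul_cancel₀ _ (ha j).ne']
      rw [h2, ← h1, Finset.sum_apply, Finset.sum_mul]
      refine Finset.sum_congr rfl fun i _ => ?_
      simp [hv]
    exact mem_convexHull_of_exists_fintype _ v hw hsum (fun i => Set.mem_range_self i) hxe

/-- For the staircase simplex `Δ = conv{v₀,…,v_{n+1}} ⊂ ℝ^{n+1}` with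
`vᵢ = (a₁,…,aᵢ,0,…,0)`, `aⱼ > 0`, and `Δ_τ` the part of `Δ` where the last coordinate
is `≥ τ` (with `0 < τ < min(1, a_{n+1})`), one has
`∫_{Δ_τ} dx/(x₁⋯x_{n+1}) = (log a_{n+1} - log τ)^{n+1}/(n+1)!`. -/
theorem staircase_simplex_integral {n : ℕ}
    (a : Fin (n + 1) → ℝ) (ha : ∀ j, 0 < a j)
    (v : Fin (n + 2) → (Fin (n + 1) → ℝ))
    (hv : ∀ i j, v i j = if (j : ℕ) < (i : ℕ) then a j else 0)
    (τ : ℝ) (hτ0 : 0 < τ) (hτ1 : τ < 1) (hτa : τ < a (Fin.last n)) :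
    (∫ x in (convexHull ℝ (Set.range v)) ∩ {x : Fin (n + 1) → ℝ | τ ≤ x (Fin.last n)},
        (∏ j, x j)⁻¹) =
      (Real.log (a (Fin.last n)) - Real.log τ) ^ (n + 1) / (Nat.factorial (n + 1)) := by
  have hl := ha (Fin.last n)
  have hset : (convexHull ℝ (Set.range v)) ∩ {x : Fin (n + 1) → ℝ | τ ≤ x (Fin.last n)}
      = stairSet a (τ / a (Fin.last n)) 1 := by
    rw [hull_eq a ha v hv]
    ext x
    constructor
    · rintro ⟨hx, hx'⟩
      refine ⟨hx.1, fun i => ⟨?_, (hx.2 i).2⟩⟩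
      refine le_trans ?_ (hx.1 i (Fin.last n) (Fin.le_last i))
      exact div_le_div_of_nonneg_right hx' hl.le
    · intro hx
      refine ⟨⟨hx.1, fun i => ⟨le_trans (by positivity) (hx.2 i).1, (hx.2 i).2⟩⟩, ?_⟩
      exact (div_le_div_iff_of_pos_right hl).1 (hx.2 (Fin.last n)).1
  rw [hset, stair_integral (n+1) a ha _ _ (by positivity) ((div_le_one hl).2 hτa.le),
    Real.log_div hτ0.ne' hl.ne']
  simp
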